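/- Assume the base hypotheses. Suppose lim_{t→∞} g(t)/(f∘F⁻¹)(t) = +∞, f ∈ RV₀(β) for some β > 1, g ∈ RV_∞(-θ) for some θ > 0, and the unique continuous solution x of x'(t) = -f(x(t)) + g(t), x(0) = ξ > 0, satisfies x(t) → 0 as t → ∞. Then lim_{t→∞} f(x(t))/g(t) = 1. -/

import Mathlib

open Filter Real Set Topology MeasureTheory

noncomputable section

/-- A function `f : (0,∞) → (0,∞)` is regularly varying at `0` with index `β` if
`f(λx)/f(x) → λ^β` as `x → 0⁺` for every `λ > 0`. -/
def RVat0 (f : ℝ → ℝ) (β : ℝ) : Prop :=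
  ∀ lam : ℝ, 0 < lam →
    Tendsto (fun x => f (lam * x) / f x) (nhdsWithin 0 (Set.Ioi 0)) (nhds (lam ^ β))

/-- A function `h : (0,∞) → (0,∞)` is regularly varying at `∞` with index `α` if
`h(λt)/h(t) → λ^α` as `t → ∞` for every `λ > 0`. -/
def RVatInf (h : ℝ → ℝ) (α : ℝ) : Prop :=
  ∀ lam : ℝ, 0 < lam →
    Tendsto (fun t => h (lam * t) / h t) atTop (nhds (lam ^ α))

/-- A continuous solution of the perturbed ODE `x'(t) = -f(x(t)) + g(t)`, `t > 0`,
with initial condition `x(0) = ξ`. -/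
def IsSol (f g : ℝ → ℝ) (ξ : ℝ) (x : ℝ → ℝ) : Prop :=
  ContinuousOn x (Set.Ici 0) ∧ x 0 = ξ ∧
    ∀ t : ℝ, 0 < t → HasDerivAt x (-f (x t) + g t) t

/-!
Regular variation is uniform near the ratio `1`, so `g` is almost constant on the windows
`[ρ * t, t]` with `ρ` close to `1`, while `f` is almost increasing near `0`. A late window cannot
lie entirely in the regime `c * g < f ∘ x`, in which `x` follows the much smaller solutions of
`y' = -f y` up to a constant factor in time, nor in the regime `c * f ∘ x < g`, in which `x` grows
too fast for `β > 1`. After the last time in the window at which the regime fails `x` is monotone,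
so the comparison between `f ∘ x` and `g` at that time persists at `t`, up to factors close to `1`.
-/

open Asymptotics

section AsymptoticComparison

variable {ι : Type*} {l : Filter ι} {u v : ι → ℝ}

/-- `u` is asymptotically at most `v` along `l`, that is `limsup u / v ≤ 1` when `v` is eventually
positive; stated without division. -/
def AsympLE (l : Filter ι) (u v : ι → ℝ) : Prop :=
  ∀ c : ℝ, 1 < c → ∀ᶠ t in l, u t ≤ c * v t

namespace AsympLE

lemma of_pow {n : ℕ} (hn : n ≠ 0) (h : ∀ c : ℝ, 1 < c → ∀ᶠ t in l, u t ≤ c ^ n * v t) :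
    AsympLE l u v := fun c hc => by
  have hroot := h (c ^ (n : ℝ)⁻¹) (Real.one_lt_rpow hc (by positivity))
  rwa [Real.rpow_inv_natCast_pow (by positivity) hn] at hroot

lemma tendsto_div (huv : AsympLE l u v) (hvu : AsympLE l v u) (hv : ∀ᶠ t in l, 0 < v t) :
    Tendsto (fun t => u t / v t) l (𝓝 1) := by
  refine tendsto_order.2 ⟨fun a ha => ?_, fun a ha => ?_⟩
  · have hinv : Tendsto (fun c : ℝ => c⁻¹) (𝓝[>] 1) (𝓝 1) := by
      simpa using (tendsto_inv₀ (one_ne_zero (α := ℝ))).mono_left nhdsWithin_le_nhds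
    obtain ⟨c, hac, hc⟩ := ((hinv.eventually_const_lt ha).and self_mem_nhdsWithin).exists
    have hc0 : 0 < c := one_pos.trans hc
    filter_upwards [hvu c hc, hv] with t ht hvt
    refine hac.trans_le ((le_div_iff₀ hvt).2 ?_)
    rwa [inv_mul_le_iff₀ hc0]
  · obtain ⟨c, hc, hca⟩ := exists_between ha
    filter_upwards [huv c hc, hv] with t ht hvt
    exact ((div_le_iff₀ hvt).2 ht).trans_lt hca

end AsympLE

end AsymptoticComparison

section RegularVariation

variable {f g : ℝ → ℝ} {α β c : ℝ}

-- The Baire category theorem upgrades pointwise convergence to uniform convergence near some `u₀`;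
-- translating by `u₀` moves this to a neighbourhood of `0`.
lemma tendsto_add_sub_self_atTop_prod_nhds_zero {E : Type*} [SeminormedAddCommGroup E]
    {H L : ℝ → E} (hH : Continuous H) (hL : Continuous L)
    (h : ∀ u, Tendsto (fun s => H (s + u) - H s) atTop (𝓝 (L u))) :
    Tendsto (fun p : ℝ × ℝ => H (p.1 + p.2) - H p.1) (atTop ×ˢ 𝓝 0) (𝓝 0) := by
  refine Metric.tendsto_nhds.2 fun ε hε => ?_
  let A : ℕ → Set ℝ := fun n => {u | ∀ s ≥ (n : ℝ), ‖H (s + u) - H s - L u‖ ≤ ε / 4}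
  have hA_closed (n : ℕ) : IsClosed (A n) := by
    simp only [A, ofPred_forall]
    exact isClosed_iInter fun s => isClosed_iInter fun _ =>
      isClosed_le (by fun_prop) continuous_const
  have hA_cover : ⋃ n, A n = univ := by
    refine eq_univ_of_forall fun u => mem_iUnion.2 ?_
    obtain ⟨N, hN⟩ := eventually_atTop.1 (Metric.tendsto_nhds.1 (h u) (ε / 4) (by positivity))
    obtain ⟨n, hn⟩ := exists_nat_ge N
    exact ⟨n, fun s hs => by simpa only [dist_eq_norm] using (hN s (hn.trans hs)).le⟩
  obtain ⟨n, u₀, hu₀⟩ := nonempty_interior_of_iUnion_of_closed hA_closed hA_cover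
  have hshift : Tendsto (fun v => u₀ + v) (𝓝 0) (𝓝 u₀) := by
    simpa using (continuous_const_add u₀).tendsto 0
  have hv_mem := hshift.eventually (mem_interior_iff_mem_nhds.1 hu₀)
  have hLv := hshift.eventually
    (Metric.tendsto_nhds.1 hL.continuousAt (ε / 4) (by positivity))
  filter_upwards [(eventually_ge_atTop ((n : ℝ) + u₀)).prod_mk (hv_mem.and hLv)]
    with ⟨s, v⟩ ⟨hs, hv, hLv⟩
  have hs' : (n : ℝ) ≤ s - u₀ := by linarith
  have hnear := hv (s - u₀) hs'
  have hbase := interior_subset hu₀ (s - u₀) hs'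
  rw [show s - u₀ + (u₀ + v) = s + v by ring] at hnear
  rw [sub_add_cancel] at hbase
  rw [dist_eq_norm] at hLv
  rw [dist_zero_right]
  calc ‖H (s + v) - H s‖
      = ‖(H (s + v) - H (s - u₀) - L (u₀ + v)) - (H s - H (s - u₀) - L u₀)
          + (L (u₀ + v) - L u₀)‖ := by congr 1; abel
    _ ≤ ‖H (s + v) - H (s - u₀) - L (u₀ + v)‖ + ‖H s - H (s - u₀) - L u₀‖
          + ‖L (u₀ + v) - L u₀‖ :=
        (norm_add_le _ _).trans (add_le_add_left (norm_sub_le _ _) _)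
    _ < ε := by linarith

namespace RVatInf

lemma tendsto_log_comp_exp (hg_pos : ∀ t, 0 < t → 0 < g t) (hg : RVatInf g α) (u : ℝ) :
    Tendsto (fun s => log (g (exp (s + u))) - log (g (exp s))) atTop (𝓝 (α * u)) := by
  have hratio := ((hg (exp u) (exp_pos u)).comp tendsto_exp_atTop).log (by positivity)
  rw [Real.log_rpow (exp_pos u), Real.log_exp] at hratio
  refine hratio.congr fun s => ?_
  rw [Function.comp_apply, ← Real.exp_add, add_comm u,
    Real.log_div (hg_pos _ (exp_pos _)).ne' (hg_pos _ (exp_pos _)).ne']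

lemma tendsto_mul_div_self (hg_cont : ContinuousOn g (Ioi 0)) (hg_pos : ∀ t, 0 < t → 0 < g t)
    (hg : RVatInf g α) :
    Tendsto (fun p : ℝ × ℝ => g (p.1 * p.2) / g p.1) (atTop ×ˢ 𝓝 1) (𝓝 1) := by
  have hcont : Continuous fun s => log (g (exp s)) :=
    (hg_cont.comp_continuous Real.continuous_exp exp_pos).log fun s => (hg_pos _ (exp_pos s)).ne'
  have hlog : Tendsto (Prod.map log log) (atTop ×ˢ 𝓝 (1 : ℝ)) (atTop ×ˢ 𝓝 0) :=
    Real.tendsto_log_atTop.prodMap (by simpa using (Real.continuousAt_log one_ne_zero).tendsto)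
  have hexp := ((tendsto_add_sub_self_atTop_prod_nhds_zero hcont
    (continuous_const_mul α) (hg.tendsto_log_comp_exp hg_pos)).comp hlog).rexp
  rw [Real.exp_zero] at hexp
  refine hexp.congr' ?_
  filter_upwards [(eventually_gt_atTop 0).prod_mk (lt_mem_nhds one_pos)] with ⟨t, s⟩ ⟨ht, hs⟩
  simp only [Function.comp_apply, Prod.map_apply]
  rw [Real.exp_add, Real.exp_sub, Real.exp_log ht, Real.exp_log hs,
    Real.exp_log (hg_pos _ (mul_pos ht hs)), Real.exp_log (hg_pos t ht)]

lemma exists_forall_mem_Icc_le_mul (hg_cont : ContinuousOn g (Ioi 0))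
    (hg_pos : ∀ t, 0 < t → 0 < g t) (hg : RVatInf g α) (hc : 1 < c) :
    ∃ ρ ∈ Ioo (0 : ℝ) 1, ∀ᶠ t in atTop, ∀ s ∈ Icc (ρ * t) t, g s ≤ c * g t ∧ g t ≤ c * g s := by
  have hc0 : 0 < c := one_pos.trans hc
  obtain ⟨P, hP, Q, hQ, hPQ⟩ := eventually_prod_iff.1
    ((hg.tendsto_mul_div_self hg_cont hg_pos).eventually
      (Ioo_mem_nhds (inv_lt_one_of_one_lt₀ hc) hc))
  obtain ⟨ρ', hρ', hQρ'⟩ := mem_nhdsLE_iff_exists_Icc_subset.1 (nhdsWithin_le_nhds hQ)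
  obtain ⟨ρ, hρ, hρ1⟩ := exists_between (max_lt one_pos hρ')
  have hρ0 : 0 < ρ := (le_max_left _ _).trans_lt hρ
  refine ⟨ρ, ⟨hρ0, hρ1⟩, ?_⟩
  filter_upwards [hP, eventually_gt_atTop 0] with t hPt ht s ⟨hρs, hst⟩
  have hQs : Q (s / t) := hQρ'
    ⟨((le_max_right _ _).trans hρ.le).trans ((le_div_iff₀ ht).2 hρs), (div_le_one ht).2 hst⟩
  have hbounds := hPQ hPt hQs
  rw [mul_div_cancel₀ _ ht.ne'] at hbounds
  refine ⟨((div_lt_iff₀ (hg_pos t ht)).1 hbounds.2).le, ?_⟩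
  have hlow := (lt_div_iff₀ (hg_pos t ht)).1 hbounds.1
  exact ((inv_mul_lt_iff₀ hc0).1 hlow).le

lemma eventually_forall_ge_le_mul (hg_cont : ContinuousOn g (Ioi 0))
    (hg_pos : ∀ t, 0 < t → 0 < g t) (hα : α < 0) (hg : RVatInf g α) (hc : 1 < c) :
    ∀ᶠ t in atTop, ∀ s ≥ t, g s ≤ c * g t := by
  obtain ⟨ρ, ⟨hρ0, hρ1⟩, hosc⟩ := hg.exists_forall_mem_Icc_le_mul hg_cont hg_pos hc
  have hr : 1 < ρ⁻¹ := one_lt_inv_iff₀.2 ⟨hρ0, hρ1⟩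
  have hstep : ∀ᶠ t in atTop, g (ρ⁻¹ * t) ≤ g t := by
    have hpow : ρ⁻¹ ^ α < 1 := Real.rpow_lt_one_of_one_lt_of_neg hr hα
    filter_upwards [(hg ρ⁻¹ (by positivity)).eventually_lt_const hpow, eventually_gt_atTop 0]
      with t ht ht0
    exact ((div_lt_one (hg_pos t ht0)).1 ht).le
  filter_upwards [eventually_forall_ge_atTop.2 hstep, eventually_forall_ge_atTop.2 hosc,
    eventually_gt_atTop 0] with t hstep hosc ht s hts
  have hge (k : ℕ) : t ≤ ρ⁻¹ ^ k * t := le_mul_of_one_le_left ht.le (one_le_pow₀ hr.le)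
  have hpow (k : ℕ) : g (ρ⁻¹ ^ k * t) ≤ g t := by
    induction k with
    | zero => simp
    | succ k ih =>
      rw [pow_succ', mul_assoc]
      exact (hstep _ (hge k)).trans ih
  obtain ⟨k, hk, hk'⟩ := exists_nat_pow_near ((one_le_div ht).2 hts) hr
  have hlow : ρ * s ≤ ρ⁻¹ ^ k * t := by
    rw [div_lt_iff₀ ht, pow_succ', mul_assoc] at hk'
    exact ((lt_inv_mul_iff₀ hρ0).1 hk').le
  calc g s ≤ c * g (ρ⁻¹ ^ k * t) := (hosc s hts _ ⟨hlow, (le_div_iff₀ ht).1 hk⟩).2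
    _ ≤ c * g t := by gcongr; exact hpow k

lemma isBigO_comp_mul (hg_pos : ∀ t, 0 < t → 0 < g t) (hg : RVatInf g α) {q : ℝ} (hq : 0 < q) :
    (fun t => g (q * t)) =O[atTop] g := by
  refine isBigO_of_div_tendsto_nhds ?_ _ (hg q hq)
  filter_upwards [eventually_gt_atTop 0] with t ht h
  exact absurd h (hg_pos t ht).ne'

end RVatInf

namespace RVat0

lemma comp_inv (hf : RVat0 f β) : RVatInf (fun t => f t⁻¹) (-β) := fun lam hlam => by
  have hlim := (hf lam⁻¹ (inv_pos.2 hlam)).comp tendsto_inv_atTop_nhdsGT_zero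
  rw [Real.inv_rpow hlam.le, ← Real.rpow_neg hlam.le] at hlim
  simpa only [Function.comp_def, mul_inv] using hlim

lemma eventually_forall_mem_Ioc_le_mul (hf_cont : ContinuousOn f (Ioi 0))
    (hf_pos : ∀ y, 0 < y → 0 < f y) (hβ : 0 < β) (hf : RVat0 f β) (hc : 1 < c) :
    ∀ᶠ b in 𝓝[>] 0, ∀ a ∈ Ioc 0 b, f a ≤ c * f b := by
  have hcont : ContinuousOn (fun t => f t⁻¹) (Ioi 0) :=
    hf_cont.comp (continuousOn_inv₀.mono fun _ ht => ne_of_gt ht)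
      fun _ ht => mem_Ioi.2 (inv_pos.2 ht)
  have hdecr := hf.comp_inv.eventually_forall_ge_le_mul hcont
    (fun t ht => hf_pos _ (inv_pos.2 ht)) (neg_lt_zero.2 hβ) hc
  filter_upwards [tendsto_inv_nhdsGT_zero.eventually hdecr] with b hb a ⟨ha, hab⟩
  simpa only [inv_inv] using hb a⁻¹ (inv_anti₀ ha hab)

lemma eventually_comp_mul_le (hf_pos : ∀ y, 0 < y → 0 < f y) (hf : RVat0 f β) {lam : ℝ}
    (hlam : 0 < lam) (hc : lam ^ β < c) : ∀ᶠ y in 𝓝[>] 0, f (lam * y) ≤ c * f y := by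
  filter_upwards [(hf lam hlam).eventually_lt_const hc, self_mem_nhdsWithin] with y hy hy0
  exact ((div_lt_iff₀ (hf_pos y hy0)).1 hy).le

end RVat0

end RegularVariation

section DescentTime

variable {f g F Finv : ℝ → ℝ} {β : ℝ}

/-- `F` is, up to an additive constant, the time `y ↦ ∫_y^1 du / f u` which the solutions of
`y' = -f y` starting at `1` take to descend to `y`. -/
def IsDescentTime (f F : ℝ → ℝ) : Prop :=
  ∀ y : ℝ, 0 < y → HasDerivAt F (-(f y)⁻¹) y

namespace IsDescentTime

lemma of_eq_integral (hf_cont : ContinuousOn f (Ioi 0)) (hf_pos : ∀ y, 0 < y → 0 < f y)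
    (hF : ∀ y : ℝ, 0 < y → F y = ∫ u in y..(1 : ℝ), 1 / f u) : IsDescentTime f F := fun y hy => by
  have hcont : ContinuousOn (fun u => 1 / f u) (Ioi 0) :=
    continuousOn_const.div hf_cont fun u hu => (hf_pos u hu).ne'
  have hint : IntervalIntegrable (fun u => 1 / f u) volume y 1 :=
    (hcont.mono fun u hu => (lt_min hy one_pos).trans_le hu.1).intervalIntegrable
  have hderiv := intervalIntegral.integral_hasDerivAt_left hint
    (hcont.stronglyMeasurableAtFilter isOpen_Ioi y hy) (hcont.continuousAt (Ioi_mem_nhds hy))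
  rw [one_div] at hderiv
  refine hderiv.congr_of_eventuallyEq ?_
  filter_upwards [Ioi_mem_nhds hy] with z hz using hF z hz

lemma strictAntiOn (hF : IsDescentTime f F) (hf_pos : ∀ y, 0 < y → 0 < f y) :
    StrictAntiOn F (Ioi 0) := by
  refine strictAntiOn_of_deriv_neg (convex_Ioi 0)
    (fun y hy => (hF y hy).continuousAt.continuousWithinAt) fun y hy => ?_
  rw [interior_Ioi] at hy
  rw [(hF y hy).deriv]
  exact neg_lt_zero.2 (inv_pos.2 (hf_pos y hy))

lemma tendsto_inverse (hF : IsDescentTime f F) (hf_pos : ∀ y, 0 < y → 0 < f y)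
    (hFinv : ∀ᶠ t in atTop, 0 < Finv t ∧ F (Finv t) = t) : Tendsto Finv atTop (𝓝[>] 0) := by
  have hpos : ∀ᶠ t in atTop, 0 < Finv t := hFinv.mono fun t ht => ht.1
  refine tendsto_nhdsWithin_iff.2 ⟨tendsto_order.2 ⟨fun a ha => ?_, fun a ha => ?_⟩, hpos⟩
  · filter_upwards [hpos] with t ht using ha.trans ht
  · filter_upwards [hFinv, eventually_gt_atTop (F a)] with t ⟨hpos, heq⟩ hta
    rw [← heq] at hta
    exact ((hF.strictAntiOn hf_pos).lt_iff_gt ha hpos).1 hta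

lemma eventually_nonneg (hF : IsDescentTime f F) (hf_pos : ∀ y, 0 < y → 0 < f y)
    (hFinv : ∀ᶠ t in atTop, 0 < Finv t ∧ F (Finv t) = t) : ∀ᶠ y in 𝓝[>] 0, 0 ≤ F y := by
  obtain ⟨t, ⟨hpos, heq⟩, ht⟩ := (hFinv.and (eventually_ge_atTop 0)).exists
  filter_upwards [Ioo_mem_nhdsGT hpos] with y ⟨hy0, hy⟩
  exact (ht.trans_eq heq.symm).trans ((hF.strictAntiOn hf_pos).antitoneOn hy0 hpos hy.le)

-- One half of Karamata's theorem: `F y ≥ F y - F (2 * y) = y / f z` for some `z` in `(y, 2 * y)`.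
lemma exists_eventually_le_mul (hF : IsDescentTime f F) (hf_cont : ContinuousOn f (Ioi 0))
    (hf_pos : ∀ y, 0 < y → 0 < f y) (hF_nonneg : ∀ᶠ y in 𝓝[>] 0, 0 ≤ F y) (hβ : 0 < β)
    (hf : RVat0 f β) : ∃ C > 0, ∀ᶠ y in 𝓝[>] 0, y ≤ C * (F y * f y) := by
  set K : ℝ := 2 ^ β + 1
  refine ⟨2 * K, by positivity, ?_⟩
  filter_upwards [eventually_nhdsGT_zero_mul_left two_pos hF_nonneg,
    eventually_nhdsGT_zero_mul_left two_pos
      (hf.eventually_forall_mem_Ioc_le_mul hf_cont hf_pos hβ one_lt_two),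
    hf.eventually_comp_mul_le hf_pos two_pos (lt_add_one _),
    self_mem_nhdsWithin] with y hF2y hmono hf2y (hy : 0 < y)
  obtain ⟨z, ⟨hyz, hz⟩, hslope⟩ := exists_hasDerivAt_eq_slope F (fun u => -(f u)⁻¹)
    (show y < 2 * y by linarith)
    (fun u hu => (hF u (hy.trans_le hu.1)).continuousAt.continuousWithinAt)
    (fun u hu => hF u (hy.trans hu.1))
  have hz0 : 0 < z := hy.trans hyz
  have hfz := hf_pos z hz0
  have hyF : y ≤ F y * f z := by
    rw [eq_div_iff (by linarith), show 2 * y - y = y by ring] at hslope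
    rw [← div_le_iff₀ hfz, div_eq_inv_mul]
    linarith
  have hFy : 0 ≤ F y := by
    by_contra! hneg
    linarith [mul_neg_of_neg_of_pos hneg hfz]
  calc y ≤ F y * f z := hyF
    _ ≤ F y * (2 * (K * f y)) := by gcongr; exact (hmono z ⟨hz0, hz.le⟩).trans (by gcongr)
    _ = 2 * K * (F y * f y) := by ring

-- Since `y / f y` varies regularly with index `1 - β < 0`, it is much larger at `μ * y` than at
-- `y` when `μ` is small.
lemma exists_eventually_le_mul_comp_mul (hF : IsDescentTime f F)
    (hf_cont : ContinuousOn f (Ioi 0)) (hf_pos : ∀ y, 0 < y → 0 < f y)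
    (hF_nonneg : ∀ᶠ y in 𝓝[>] 0, 0 ≤ F y) (hβ : 1 < β) (hf : RVat0 f β) {ε : ℝ} (hε : 0 < ε) :
    ∃ μ > 0, ∀ᶠ y in 𝓝[>] 0, y ≤ ε * (F (μ * y) * f y) := by
  obtain ⟨C, hC, hbound⟩ := hF.exists_eventually_le_mul hf_cont hf_pos hF_nonneg
    (one_pos.trans hβ) hf
  have hpow : Tendsto (fun μ : ℝ => 2 * C * μ ^ (β - 1)) (𝓝[>] 0) (𝓝 0) := by
    have := ((Real.continuousAt_rpow_const 0 (β - 1) (.inr (by linarith))).tendsto.const_mul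
      (2 * C)).mono_left (nhdsWithin_le_nhds (s := Ioi 0))
    rwa [Real.zero_rpow (by linarith), mul_zero] at this
  obtain ⟨μ, hμε, hμ⟩ := ((hpow.eventually_lt_const hε).and self_mem_nhdsWithin).exists
  replace hμ : 0 < μ := hμ
  have hμβ : μ ^ β < 2 * μ ^ β := by linarith [Real.rpow_pos_of_pos hμ β]
  refine ⟨μ, hμ, ?_⟩
  filter_upwards [eventually_nhdsGT_zero_mul_left hμ hbound,
    eventually_nhdsGT_zero_mul_left hμ hF_nonneg, hf.eventually_comp_mul_le hf_pos hμ hμβ,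
    self_mem_nhdsWithin] with y hy hFy hfy (hy0 : 0 < y)
  have hfy0 := hf_pos y hy0
  refine le_of_mul_le_mul_left ?_ hμ
  calc μ * y ≤ C * (F (μ * y) * f (μ * y)) := hy
    _ ≤ C * (F (μ * y) * (2 * μ ^ β * f y)) := by gcongr
    _ = μ * (2 * C * μ ^ (β - 1) * (F (μ * y) * f y)) := by
        rw [Real.rpow_sub_one hμ.ne']; field_simp
    _ ≤ μ * (ε * (F (μ * y) * f y)) := by gcongr

lemma inverse_isLittleO (hF : IsDescentTime f F) (hf_cont : ContinuousOn f (Ioi 0))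
    (hf_pos : ∀ y, 0 < y → 0 < f y) (hFinv : ∀ᶠ t in atTop, 0 < Finv t ∧ F (Finv t) = t)
    (hfg : (fun t => f (Finv t)) =o[atTop] g) (hβ : 0 < β) (hf : RVat0 f β) :
    Finv =o[atTop] fun t => t * g t := by
  obtain ⟨C, -, hbound⟩ := hF.exists_eventually_le_mul hf_cont hf_pos
    (hF.eventually_nonneg hf_pos hFinv) hβ hf
  have hbigO : Finv =O[atTop] fun t => t * f (Finv t) := by
    refine IsBigO.of_bound C ?_
    filter_upwards [(hF.tendsto_inverse hf_pos hFinv).eventually hbound, hFinv,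
      eventually_ge_atTop 0] with t ht ⟨hpos, heq⟩ ht0
    rw [heq] at ht
    rwa [Real.norm_of_nonneg hpos.le,
      Real.norm_of_nonneg (mul_nonneg ht0 (hf_pos _ hpos).le)]
  exact hbigO.trans_isLittleO ((isBigO_refl (fun t : ℝ => t) atTop).mul_isLittleO hfg)

end IsDescentTime

end DescentTime

section PositiveSolution

lemma exists_last_le {X Y : Type*} [LinearOrder X] [TopologicalSpace X] [OrderTopology X]
    [CompactIccSpace X] [Preorder Y] [TopologicalSpace Y] [OrderClosedTopology Y] {φ ψ : X → Y}
    {a b s : X} (hφ : ContinuousOn φ (Icc a b)) (hψ : ContinuousOn ψ (Icc a b))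
    (hs : s ∈ Icc a b) (hle : φ s ≤ ψ s) :
    ∃ t ∈ Icc a b, φ t ≤ ψ t ∧ ∀ u ∈ Ioc t b, ¬φ u ≤ ψ u := by
  have hK : IsCompact {t | t ∈ Icc a b ∧ φ t ≤ ψ t} :=
    isCompact_Icc.of_isClosed_subset (isClosed_Icc.isClosed_le hφ hψ) fun _ ht => ht.1
  obtain ⟨t, ⟨ht, htle⟩, hmax⟩ := hK.exists_isGreatest ⟨s, hs, hle⟩
  exact ⟨t, ht, htle, fun u hu hule => hu.1.not_ge (hmax ⟨⟨ht.1.trans hu.1.le, hu.2⟩, hule⟩)⟩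

variable {f g F Finv x : ℝ → ℝ} {α β a b c ξ ρ : ℝ}

/-- `x` is a positive solution of `x' = -f x + g` on `(0, ∞)`, with no condition at time `0`. -/
structure IsPosSol (f g x : ℝ → ℝ) : Prop where
  pos : ∀ t, 0 < t → 0 < x t
  hasDerivAt : ∀ t, 0 < t → HasDerivAt x (-f (x t) + g t) t

lemma IsSol.pos (hx : IsSol f g ξ x) (hξ : 0 < ξ) (hf_zero : f 0 ≤ 0)
    (hg_pos : ∀ t, 0 < t → 0 < g t) {t : ℝ} (ht : 0 ≤ t) : 0 < x t := by
  obtain ⟨hcont, hx0, hderiv⟩ := hx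
  by_contra! hxt
  have hK : IsCompact {s | s ∈ Icc 0 t ∧ x s ≤ 0} :=
    isCompact_Icc.of_isClosed_subset
      (isClosed_Icc.isClosed_le (hcont.mono Icc_subset_Ici_self) continuousOn_const)
      fun _ hs => hs.1
  obtain ⟨τ, ⟨⟨hτ, hτt⟩, hxτ⟩, hmin⟩ := hK.exists_isLeast ⟨t, ⟨ht, le_rfl⟩, hxt⟩
  have hxτ0 : x τ = 0 := by
    obtain ⟨s, hs, hxs⟩ := intermediate_value_Icc' hτ (hcont.mono Icc_subset_Ici_self)
      (show (0 : ℝ) ∈ Icc (x τ) (x 0) from ⟨hxτ, hx0.symm ▸ hξ.le⟩)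
    rwa [← hs.2.antisymm (hmin ⟨⟨hs.1, hs.2.trans hτt⟩, hxs.le⟩)]
  have hτ0 : 0 < τ := hτ.lt_of_ne fun h => by rw [← h, hx0] at hxτ0; exact hξ.ne' hxτ0
  have hslope : 0 < deriv x τ := by
    rw [(hderiv τ hτ0).deriv, hxτ0]
    linarith [hg_pos τ hτ0]
  obtain ⟨s, hsign, hs0, hsτ⟩ := (((eventually_nhdsWithin_sign_eq_of_deriv_pos hslope
    hxτ0).filter_mono nhdsWithin_le_nhds).and (Ioo_mem_nhdsLT hτ0)).exists
  have hxs : x s < 0 := by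
    rwa [sign_neg (sub_neg.2 hsτ), sign_eq_neg_one_iff] at hsign
  exact hsτ.not_ge (hmin ⟨⟨hs0.le, hsτ.le.trans hτt⟩, hxs.le⟩)

lemma IsSol.isPosSol (hx : IsSol f g ξ x) (hξ : 0 < ξ) (hf_zero : f 0 ≤ 0)
    (hg_pos : ∀ t, 0 < t → 0 < g t) : IsPosSol f g x where
  pos _ ht := hx.pos hξ hf_zero hg_pos ht.le
  hasDerivAt := hx.2.2

namespace IsPosSol

lemma continuousOn (hx : IsPosSol f g x) : ContinuousOn x (Ioi 0) :=
  fun t ht => (hx.hasDerivAt t ht).continuousAt.continuousWithinAt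

lemma continuousOn_comp (hx : IsPosSol f g x) (hf_cont : ContinuousOn f (Ioi 0)) :
    ContinuousOn (fun t => f (x t)) (Ioi 0) :=
  hf_cont.comp hx.continuousOn hx.pos

lemma antitoneOn_Icc (hx : IsPosSol f g x) (ha : 0 < a) (h : ∀ t ∈ Ioo a b, g t ≤ f (x t)) :
    AntitoneOn x (Icc a b) := by
  refine antitoneOn_of_hasDerivWithinAt_nonpos (f' := fun t => -f (x t) + g t) (convex_Icc a b)
    (hx.continuousOn.mono fun t ht => ha.trans_le ht.1) ?_ ?_ <;>
    rw [interior_Icc] <;> intro t ht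
  · exact (hx.hasDerivAt t (ha.trans ht.1)).hasDerivWithinAt
  · linarith [h t ht]

lemma monotoneOn_Icc (hx : IsPosSol f g x) (ha : 0 < a) (h : ∀ t ∈ Ioo a b, f (x t) ≤ g t) :
    MonotoneOn x (Icc a b) := by
  refine monotoneOn_of_hasDerivWithinAt_nonneg (f' := fun t => -f (x t) + g t) (convex_Icc a b)
    (hx.continuousOn.mono fun t ht => ha.trans_le ht.1) ?_ ?_ <;>
    rw [interior_Icc] <;> intro t ht
  · exact (hx.hasDerivAt t (ha.trans ht.1)).hasDerivWithinAt
  · linarith [h t ht]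

lemma exists_comp_le_mul_and_apply_le (hx : IsPosSol f g x) (hf_cont : ContinuousOn f (Ioi 0))
    (hg_cont : ContinuousOn g (Ioi 0)) (hg_pos : ∀ t, 0 < t → 0 < g t) (hc : 1 ≤ c) (ha : 0 < a)
    (h : ∃ s ∈ Icc a b, f (x s) ≤ c * g s) :
    ∃ s ∈ Icc a b, f (x s) ≤ c * g s ∧ x b ≤ x s := by
  obtain ⟨s, hs, hle⟩ := h
  have hsub : Icc a b ⊆ Ioi 0 := fun t ht => ha.trans_le ht.1
  obtain ⟨τ, hτ, hτle, hlast⟩ := exists_last_le ((hx.continuousOn_comp hf_cont).mono hsub)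
    ((hg_cont.const_mul c).mono hsub) hs hle
  have hanti : AntitoneOn x (Icc τ b) := hx.antitoneOn_Icc (hsub hτ) fun t ht =>
    (le_mul_of_one_le_left (hg_pos t ((hsub hτ).trans ht.1)).le hc).trans
      (not_le.1 (hlast t ⟨ht.1, ht.2.le⟩)).le
  exact ⟨τ, hτ, hτle, hanti (left_mem_Icc.2 hτ.2) (right_mem_Icc.2 hτ.2) hτ.2⟩

lemma exists_le_mul_comp_and_le_apply (hx : IsPosSol f g x) (hf_cont : ContinuousOn f (Ioi 0))
    (hf_pos : ∀ y, 0 < y → 0 < f y) (hg_cont : ContinuousOn g (Ioi 0)) (hc : 1 ≤ c) (ha : 0 < a)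
    (h : ∃ s ∈ Icc a b, g s ≤ c * f (x s)) :
    ∃ s ∈ Icc a b, g s ≤ c * f (x s) ∧ x s ≤ x b := by
  obtain ⟨s, hs, hle⟩ := h
  have hsub : Icc a b ⊆ Ioi 0 := fun t ht => ha.trans_le ht.1
  obtain ⟨τ, hτ, hτle, hlast⟩ := exists_last_le (hg_cont.mono hsub)
    (((hx.continuousOn_comp hf_cont).const_mul c).mono hsub) hs hle
  have hmono : MonotoneOn x (Icc τ b) := hx.monotoneOn_Icc (hsub hτ) fun t ht =>
    (le_mul_of_one_le_left (hf_pos _ (hx.pos t ((hsub hτ).trans ht.1))).le hc).trans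
      (not_le.1 (hlast t ⟨ht.1, ht.2.le⟩)).le
  exact ⟨τ, hτ, hτle, hmono (left_mem_Icc.2 hτ.2) (right_mem_Icc.2 hτ.2) hτ.2⟩

lemma mul_sub_le_descentTime_sub (hx : IsPosSol f g x) (hF : IsDescentTime f F)
    (hf_pos : ∀ y, 0 < y → 0 < f y) (hc : 0 < c) (ha : 0 < a) (hab : a ≤ b)
    (h : ∀ t ∈ Icc a b, c * g t ≤ f (x t)) :
    (1 - c⁻¹) * (b - a) ≤ F (x b) - F (x a) := by
  have hderiv (t : ℝ) (ht : 0 < t) :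
      HasDerivAt (fun t => F (x t)) (-(f (x t))⁻¹ * (-f (x t) + g t)) t :=
    (hF _ (hx.pos t ht)).comp t (hx.hasDerivAt t ht)
  refine (convex_Icc a b).mul_sub_le_image_sub_of_le_deriv
    (fun t ht => (hderiv t (ha.trans_le ht.1)).continuousAt.continuousWithinAt)
    (fun t ht => (hderiv t ?_).differentiableAt.differentiableWithinAt) (fun t ht => ?_)
    a (left_mem_Icc.2 hab) b (right_mem_Icc.2 hab) hab
  · exact ha.trans_le (interior_subset ht).1
  · have ht' := interior_subset ht
    have hfx := hf_pos _ (hx.pos t (ha.trans_le ht'.1))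
    have hratio : g t / f (x t) ≤ c⁻¹ := by
      rw [div_le_iff₀ hfx, le_inv_mul_iff₀ hc]
      exact h t ht'
    calc 1 - c⁻¹ ≤ 1 - g t / f (x t) := by linarith
      _ = -(f (x t))⁻¹ * (-f (x t) + g t) := by field_simp; ring
      _ = deriv (fun t => F (x t)) t := (hderiv t (ha.trans_le ht'.1)).deriv.symm

lemma mul_sub_le_sub (hx : IsPosSol f g x) (hc : 1 ≤ c) (ha : 0 < a) (hab : a ≤ b) {m : ℝ}
    (hm : ∀ t ∈ Icc a b, m ≤ g t) (h : ∀ t ∈ Icc a b, c * f (x t) ≤ g t) :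
    (1 - c⁻¹) * m * (b - a) ≤ x b - x a := by
  have hsub : Icc a b ⊆ Ioi 0 := fun t ht => ha.trans_le ht.1
  have hc0 : 0 < c := one_pos.trans_le hc
  refine (convex_Icc a b).mul_sub_le_image_sub_of_le_deriv (hx.continuousOn.mono hsub)
    (fun t ht => (hx.hasDerivAt t (hsub (interior_subset ht))).differentiableAt
      |>.differentiableWithinAt) (fun t ht => ?_)
    a (left_mem_Icc.2 hab) b (right_mem_Icc.2 hab) hab
  have ht' := interior_subset ht
  have hfx : f (x t) ≤ c⁻¹ * g t := (le_inv_mul_iff₀ hc0).2 (h t ht')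
  calc (1 - c⁻¹) * m ≤ (1 - c⁻¹) * g t :=
        mul_le_mul_of_nonneg_left (hm t ht') (sub_nonneg.2 (inv_le_one_of_one_le₀ hc))
    _ ≤ -f (x t) + g t := by linarith
    _ = deriv x t := (hx.hasDerivAt t (hsub ht')).deriv.symm

-- Otherwise `F ∘ x` grows linearly on `[ρ * t, t]`, so that `x t ≤ Finv (q * t)` for some `q > 0`,
-- which makes `f (x t)` negligible against `g t`.
lemma eventually_exists_comp_le_mul (hx : IsPosSol f g x) (hf_cont : ContinuousOn f (Ioi 0))
    (hf_pos : ∀ y, 0 < y → 0 < f y) (hg_pos : ∀ t, 0 < t → 0 < g t) (hF : IsDescentTime f F)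
    (hFinv : ∀ᶠ t in atTop, 0 < Finv t ∧ F (Finv t) = t)
    (hfg : (fun t => f (Finv t)) =o[atTop] g) (hβ : 0 < β) (hf : RVat0 f β) (hg : RVatInf g α)
    (hx_to0 : Tendsto x atTop (𝓝[>] 0)) (hc : 1 < c) (hρ : ρ ∈ Ioo 0 1) :
    ∀ᶠ t in atTop, ∃ s ∈ Icc (ρ * t) t, f (x s) ≤ c * g s := by
  obtain ⟨hρ0, hρ1⟩ := hρ
  set q := (1 - c⁻¹) * (1 - ρ)
  have hq : 0 < q := mul_pos (sub_pos.2 (inv_lt_one_of_one_lt₀ hc)) (sub_pos.2 hρ1)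
  have hq_top : Tendsto (fun t => q * t) atTop atTop := tendsto_id.const_mul_atTop hq
  have hsmall := ((hfg.comp_tendsto hq_top).trans_isBigO
    (hg.isBigO_comp_mul hg_pos hq)).bound (half_pos one_pos)
  have hmono := hf.eventually_forall_mem_Ioc_le_mul hf_cont hf_pos hβ one_lt_two
  have hρ_top : Tendsto (fun t => ρ * t) atTop atTop := tendsto_id.const_mul_atTop hρ0
  filter_upwards [hsmall, hq_top.eventually hFinv,
    (hF.tendsto_inverse hf_pos hFinv |>.comp hq_top).eventually hmono,
    (hx_to0.comp hρ_top).eventually (hF.eventually_nonneg hf_pos hFinv),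
    eventually_gt_atTop 0] with t hsmall ⟨hpos, heq⟩ hmono hF_nonneg ht
  simp only [Function.comp_apply] at hsmall hmono hF_nonneg
  by_contra! hlarge
  have hρt : ρ * t ≤ t := mul_le_of_le_one_left ht.le hρ1.le
  have hgrowth : q * t ≤ F (x t) := by
    have := hx.mul_sub_le_descentTime_sub hF hf_pos (one_pos.trans hc) (mul_pos hρ0 ht) hρt
      fun s hs => (hlarge s hs).le
    rw [show q * t = (1 - c⁻¹) * (t - ρ * t) by ring]
    linarith
  have hxt : x t ≤ Finv (q * t) := by
    rw [← heq] at hgrowth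
    exact ((hF.strictAntiOn hf_pos).le_iff_ge hpos (hx.pos t ht)).1 hgrowth
  have hgt := hg_pos t ht
  rw [Real.norm_of_nonneg (hf_pos _ hpos).le, Real.norm_of_nonneg hgt.le] at hsmall
  refine absurd (hlarge t ⟨hρt, le_rfl⟩) (not_lt.2 ?_)
  calc f (x t) ≤ 2 * f (Finv (q * t)) := hmono _ ⟨hx.pos t ht, hxt⟩
    _ ≤ g t := by linarith
    _ ≤ c * g t := le_mul_of_one_le_left hgt.le hc.le

-- Otherwise `x` grows by at least `p * t * g t` on `[ρ * t, t]`, which dominates both `t * f (x t)`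
-- and `Finv t`; these two comparisons contradict `x t ≤ ε * F (μ * x t) * f (x t)` for small `ε`.
lemma eventually_exists_le_mul_comp (hx : IsPosSol f g x) (hf_cont : ContinuousOn f (Ioi 0))
    (hf_pos : ∀ y, 0 < y → 0 < f y) (hg_pos : ∀ t, 0 < t → 0 < g t) (hF : IsDescentTime f F)
    (hFinv : ∀ᶠ t in atTop, 0 < Finv t ∧ F (Finv t) = t)
    (hfg : (fun t => f (Finv t)) =o[atTop] g) (hβ : 1 < β) (hf : RVat0 f β)
    (hx_to0 : Tendsto x atTop (𝓝[>] 0)) (hc : 1 < c) (hρ : ρ ∈ Ioo 0 1) {K : ℝ} (hK : 0 < K)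
    (hgK : ∀ᶠ t in atTop, ∀ s ∈ Icc (ρ * t) t, g t ≤ K * g s) :
    ∀ᶠ t in atTop, ∃ s ∈ Icc (ρ * t) t, g s ≤ c * f (x s) := by
  obtain ⟨hρ0, hρ1⟩ := hρ
  set p := (1 - c⁻¹) * K⁻¹ * (1 - ρ)
  have hp : 0 < p := mul_pos (mul_pos (sub_pos.2 (inv_lt_one_of_one_lt₀ hc)) (inv_pos.2 hK))
    (sub_pos.2 hρ1)
  obtain ⟨μ, hμ, hμF⟩ := hF.exists_eventually_le_mul_comp_mul hf_cont hf_pos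
    (hF.eventually_nonneg hf_pos hFinv) hβ hf hp
  have hFinv_small := (hF.inverse_isLittleO hf_cont hf_pos hFinv hfg (one_pos.trans hβ) hf).bound
    (mul_pos hμ hp)
  filter_upwards [hgK, hx_to0.eventually hμF, hFinv_small, hFinv, eventually_gt_atTop 0]
    with t hgK hμF hFinv_small ⟨hpos, heq⟩ ht
  by_contra! hsmall
  have hρt : ρ * t ≤ t := mul_le_of_le_one_left ht.le hρ1.le
  have hgt := hg_pos t ht
  have hxt := hx.pos t ht
  have hfx := hf_pos _ hxt
  have hfg_lt : f (x t) < g t :=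
    (le_mul_of_one_le_left hfx.le hc.le).trans_lt (hsmall t ⟨hρt, le_rfl⟩)
  have hgrowth : p * (t * g t) ≤ x t := by
    have := hx.mul_sub_le_sub hc.le (mul_pos hρ0 ht) hρt
      (fun s hs => (inv_mul_le_iff₀ hK).2 (hgK s hs)) fun s hs => (hsmall s hs).le
    rw [show p * (t * g t) = (1 - c⁻¹) * (K⁻¹ * g t) * (t - ρ * t) by ring]
    linarith [hx.pos _ (mul_pos hρ0 ht)]
  have hFinv_le : Finv t ≤ μ * x t := by
    rw [Real.norm_of_nonneg hpos.le, Real.norm_of_nonneg (mul_pos ht hgt).le, mul_assoc]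
      at hFinv_small
    exact hFinv_small.trans (by gcongr)
  have hF_le : F (μ * x t) ≤ t :=
    ((hF.strictAntiOn hf_pos).antitoneOn hpos (mul_pos hμ hxt) hFinv_le).trans_eq heq
  refine lt_irrefl (x t) ?_
  calc x t ≤ p * (F (μ * x t) * f (x t)) := hμF
    _ ≤ p * (t * f (x t)) := by gcongr
    _ < p * (t * g t) := by gcongr
    _ ≤ x t := hgrowth

lemma asympLE_comp (hx : IsPosSol f g x) (hf_cont : ContinuousOn f (Ioi 0))
    (hf_pos : ∀ y, 0 < y → 0 < f y) (hg_cont : ContinuousOn g (Ioi 0))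
    (hg_pos : ∀ t, 0 < t → 0 < g t) (hF : IsDescentTime f F)
    (hFinv : ∀ᶠ t in atTop, 0 < Finv t ∧ F (Finv t) = t)
    (hfg : (fun t => f (Finv t)) =o[atTop] g) (hβ : 0 < β) (hf : RVat0 f β) (hg : RVatInf g α)
    (hx_to0 : Tendsto x atTop (𝓝[>] 0)) : AsympLE atTop (fun t => f (x t)) g := by
  refine AsympLE.of_pow three_ne_zero fun c hc => ?_
  obtain ⟨ρ, hρ, hosc⟩ := hg.exists_forall_mem_Icc_le_mul hg_cont hg_pos hc
  have hρ_top : Tendsto (fun t => ρ * t) atTop atTop := tendsto_id.const_mul_atTop hρ.1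
  have hmono := eventually_forall_ge_atTop.2
    (hx_to0.eventually (hf.eventually_forall_mem_Ioc_le_mul hf_cont hf_pos hβ hc))
  filter_upwards [hosc, hρ_top.eventually hmono, eventually_gt_atTop 0,
    hx.eventually_exists_comp_le_mul hf_cont hf_pos hg_pos hF hFinv hfg hβ hf hg hx_to0 hc hρ]
    with t hosc hmono ht hex
  obtain ⟨s, hs, hfs, hxs⟩ := hx.exists_comp_le_mul_and_apply_le hf_cont hg_cont hg_pos hc.le
    (mul_pos hρ.1 ht) hex
  calc f (x t) ≤ c * f (x s) := hmono s hs.1 _ ⟨hx.pos t ht, hxs⟩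
    _ ≤ c * (c * (c * g t)) := by gcongr; exact hfs.trans (by gcongr; exact (hosc s hs).1)
    _ = c ^ 3 * g t := by ring

lemma asympLE_forcing (hx : IsPosSol f g x) (hf_cont : ContinuousOn f (Ioi 0))
    (hf_pos : ∀ y, 0 < y → 0 < f y) (hg_cont : ContinuousOn g (Ioi 0))
    (hg_pos : ∀ t, 0 < t → 0 < g t) (hF : IsDescentTime f F)
    (hFinv : ∀ᶠ t in atTop, 0 < Finv t ∧ F (Finv t) = t)
    (hfg : (fun t => f (Finv t)) =o[atTop] g) (hβ : 1 < β) (hf : RVat0 f β) (hg : RVatInf g α)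
    (hx_to0 : Tendsto x atTop (𝓝[>] 0)) : AsympLE atTop g (fun t => f (x t)) := by
  refine AsympLE.of_pow three_ne_zero fun c hc => ?_
  obtain ⟨ρ, hρ, hosc⟩ := hg.exists_forall_mem_Icc_le_mul hg_cont hg_pos hc
  have hmono := hx_to0.eventually
    (hf.eventually_forall_mem_Ioc_le_mul hf_cont hf_pos (one_pos.trans hβ) hc)
  filter_upwards [hosc, hmono, eventually_gt_atTop 0,
    hx.eventually_exists_le_mul_comp hf_cont hf_pos hg_pos hF hFinv hfg hβ hf hx_to0 hc hρ
      (one_pos.trans hc) (hosc.mono fun t ht s hs => (ht s hs).2)] with t hosc hmono ht hex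
  obtain ⟨s, hs, hgs, hxs⟩ := hx.exists_le_mul_comp_and_le_apply hf_cont hf_pos hg_cont hc.le
    (mul_pos hρ.1 ht) hex
  have hxs0 : 0 < x s := hx.pos s ((mul_pos hρ.1 ht).trans_le hs.1)
  calc g t ≤ c * g s := (hosc s hs).2
    _ ≤ c * (c * (c * f (x t))) := by gcongr; exact hgs.trans (by gcongr; exact hmono _ ⟨hxs0, hxs⟩)
    _ = c ^ 3 * f (x t) := by ring

end IsPosSol

end PositiveSolution

theorem stmt_5_general {f g F Finv x : ℝ → ℝ} {α β : ℝ} (hf_cont : ContinuousOn f (Ioi 0))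
    (hf_pos : ∀ y, 0 < y → 0 < f y) (hg_cont : ContinuousOn g (Ioi 0))
    (hg_pos : ∀ t, 0 < t → 0 < g t) (hF : IsDescentTime f F)
    (hFinv : ∀ᶠ t in atTop, 0 < Finv t ∧ F (Finv t) = t) (hx : IsPosSol f g x)
    (hLinf : Tendsto (fun t => g t / f (Finv t)) atTop atTop) (hβ : 1 < β) (hf : RVat0 f β)
    (hg : RVatInf g α) (hx_to0 : Tendsto x atTop (𝓝 0)) :
    Tendsto (fun t => f (x t) / g t) atTop (𝓝 1) := by
  have hg_ev : ∀ᶠ t in atTop, 0 < g t := (eventually_gt_atTop 0).mono hg_pos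
  have hfg : (fun t => f (Finv t)) =o[atTop] g := by
    refine isLittleO_of_tendsto' (hg_ev.mono fun t ht h => absurd h ht.ne') ?_
    simpa only [Pi.inv_def, inv_div] using hLinf.inv_tendsto_atTop
  have hx_to0' : Tendsto x atTop (𝓝[>] 0) :=
    tendsto_nhdsWithin_iff.2 ⟨hx_to0, (eventually_gt_atTop 0).mono hx.pos⟩
  have hupper : AsympLE atTop (fun t => f (x t)) g := hx.asympLE_comp hf_cont hf_pos hg_cont hg_pos
    hF hFinv hfg (one_pos.trans hβ) hf hg hx_to0'
  have hlower : AsympLE atTop g (fun t => f (x t)) := hx.asympLE_forcing hf_cont hf_pos hg_cont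
    hg_pos hF hFinv hfg hβ hf hg hx_to0'
  exact hupper.tendsto_div hlower hg_ev

/-- Theorem 2.5(i) (Theorem `fxtgt1`, part (i)): under the base hypotheses, if
`g(t)/(f∘F⁻¹)(t) → +∞`, `f ∈ RV₀(β)` with `β > 1`, `g ∈ RV_∞(-θ)` with `θ > 0`,
and the solution `x` of `x' = -f(x) + g`, `x(0) = ξ > 0`, satisfies `x(t) → 0`,
then `f(x(t))/g(t) → 1`. -/
theorem stmt_5
    (f g F Finv : ℝ → ℝ) (ξ : ℝ) (x : ℝ → ℝ)
    (hf_cont : Continuous f) (hf_lip : LocallyLipschitz f)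
    (hf_sign : ∀ y : ℝ, y ≠ 0 → 0 < y * f y) (hf_zero : f 0 = 0)
    (hg_cont : ContinuousOn g (Set.Ici 0)) (hg_pos : ∀ t : ℝ, 0 < t → 0 < g t)
    (hF : ∀ y : ℝ, 0 < y → F y = ∫ u in y..(1:ℝ), 1 / f u)
    (hF_top : Tendsto F (nhdsWithin 0 (Set.Ioi 0)) atTop)
    (hF_anti : StrictAntiOn F (Set.Ioi 0))
    (hFinv : ∀ t : ℝ, 0 ≤ t → 0 < Finv t ∧ F (Finv t) = t)
    (hFinv_to0 : Tendsto Finv atTop (nhds 0))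
    (hξ : 0 < ξ) (hx : IsSol f g ξ x)
    (hLinf : Tendsto (fun t => g t / f (Finv t)) atTop atTop)
    (β : ℝ) (hβ : 1 < β) (hfRV : RVat0 f β)
    (θ : ℝ) (hθ : 0 < θ) (hgRV : RVatInf g (-θ))
    (hx_to0 : Tendsto x atTop (nhds 0)) :
    Tendsto (fun t => f (x t) / g t) atTop (nhds 1) := by
  have hf_pos : ∀ y, 0 < y → 0 < f y := fun y hy => pos_of_mul_pos_right (hf_sign y hy.ne') hy.le
  exact stmt_5_general hf_cont.continuousOn hf_pos (hg_cont.mono Ioi_subset_Ici_self) hg_pos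
    (.of_eq_integral hf_cont.continuousOn hf_pos hF) ((eventually_ge_atTop 0).mono hFinv)
    (hx.isPosSol hξ hf_zero.le hg_pos) hLinf hβ hfRV hgRV hx_to0
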